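/- arXiv:2409.01125 — 4 statements merged into one kernel-verified Lean document; each statement's English description precedes it below -/
import Mathlib

section
/- Let σ > 0, r, q ∈ ℝ, K > 0, T > 0. The Black–Scholes European call price function C(s,t) = s·e^{-q t}·N(d₁(s,K,t)) − K·e^{-r t}·N(d₂(s,K,t)) satisfies the forward Black–Scholes partial differential equation ∂u/∂t − (1/2)σ²s² ∂²u/∂s² − (r−q)s ∂u/∂s + r u = 0 at every point (s,t) with s > 0 and 0 < t ≤ T. -/
open Real Set

/-- The standard normal cumulative distribution function. -/
noncomputable def stdNormalCDF (x : ℝ) : ℝ :=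
  ∫ y in Set.Iic x, (Real.sqrt (2 * Real.pi))⁻¹ * Real.exp (-(y ^ 2) / 2)

/-- d₁(s,K,t) in the Black–Scholes formula. -/
noncomputable def d1 (σ r q s K t : ℝ) : ℝ :=
  (Real.log (s / K) + (r - q + σ ^ 2 / 2) * t) / (σ * Real.sqrt t)

/-- d₂(s,K,t) in the Black–Scholes formula. -/
noncomputable def d2 (σ r q s K t : ℝ) : ℝ :=
  d1 σ r q s K t - σ * Real.sqrt t

/-- The Black–Scholes European call price. -/
noncomputable def callPrice (σ r q K s t : ℝ) : ℝ :=
  s * Real.exp (-q * t) * stdNormalCDF (d1 σ r q s K t)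
    - K * Real.exp (-r * t) * stdNormalCDF (d2 σ r q s K t)

/-!
Write `S = s e^{-qt}` for the discounted spot, `B = K e^{-rt}` for the discounted strike and
`a = σ√t`, so that the price is `S N(d) - B N(d - a)` with `d = d₁`. This choice of `d` is the
critical point of `S N(d) - B N(d - a)`, that is, `S φ(d) = B φ(d - a)`. Hence, as in the envelope
theorem, derivatives of `d` drop out of every first derivative of the price: the delta is
`e^{-qt} N(d₁)`, and the only density term in the theta comes from `∂a/∂t`. That term equals
`σ²s²/2` times the gamma, and the remaining terms of the equation cancel.
-/

section

open MeasureTheory ProbabilityTheory Filter Topology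

lemma hasDerivAt_setIntegral_Iic {E : Type*} [NormedAddCommGroup E] [NormedSpace ℝ E]
    [CompleteSpace E] {f : ℝ → E} {x b : ℝ} (hf : IntegrableOn f (Iic b)) (hxb : x < b)
    (hfx : ContinuousAt f x) :
    HasDerivAt (fun u => ∫ y in Iic u, f y) (f x) x := by
  have hIic {u : ℝ} (hu : u ≤ b) : IntegrableOn f (Iic u) := hf.mono_set (Iic_subset_Iic.2 hu)
  have hftc : HasDerivAt (fun u => ∫ y in x..u, f y) (f x) x :=
    intervalIntegral.integral_hasDerivAt_right .refl
      ⟨Iic b, Iic_mem_nhds hxb, hf.aestronglyMeasurable⟩ hfx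
  refine (hftc.const_add (∫ y in Iic x, f y)).congr_of_eventuallyEq ?_
  filter_upwards [Iic_mem_nhds hxb] with u hu
  rw [← intervalIntegral.integral_Iic_sub_Iic (hIic hxb.le) (hIic hu), add_sub_cancel]

lemma stdNormalCDF_eq_setIntegral_gaussianPDFReal (x : ℝ) :
    stdNormalCDF x = ∫ y in Iic x, gaussianPDFReal 0 1 y := by
  simp only [stdNormalCDF, gaussianPDFReal, NNReal.coe_one, mul_one, sub_zero]

lemma continuous_gaussianPDFReal (μ : ℝ) (v : NNReal) : Continuous (gaussianPDFReal μ v) := by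
  unfold gaussianPDFReal
  fun_prop

lemma hasDerivAt_stdNormalCDF (x : ℝ) : HasDerivAt stdNormalCDF (gaussianPDFReal 0 1 x) x := by
  rw [funext stdNormalCDF_eq_setIntegral_gaussianPDFReal]
  exact hasDerivAt_setIntegral_Iic (integrable_gaussianPDFReal 0 1).integrableOn (lt_add_one x)
    (continuous_gaussianPDFReal 0 1).continuousAt

lemma gaussianPDFReal_sub_eq_mul_exp (μ : ℝ) (v : NNReal) (x a : ℝ) :
    gaussianPDFReal μ v (x - a)
      = gaussianPDFReal μ v x * exp ((a * (x - μ) - a ^ 2 / 2) / v) := by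
  simp only [gaussianPDFReal, mul_assoc _ (exp _), ← exp_add]
  ring_nf

lemma hasDerivAt_mul_stdNormalCDF_sub {S B d a : ℝ → ℝ} {S' B' d' a' x : ℝ}
    (hS : HasDerivAt S S' x) (hB : HasDerivAt B B' x)
    (hd : HasDerivAt d d' x) (ha : HasDerivAt a a' x)
    (hbal : B x * gaussianPDFReal 0 1 (d x - a x) = S x * gaussianPDFReal 0 1 (d x)) :
    HasDerivAt (fun y => S y * stdNormalCDF (d y) - B y * stdNormalCDF (d y - a y))
      (S' * stdNormalCDF (d x) - B' * stdNormalCDF (d x - a x)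
        + S x * gaussianPDFReal 0 1 (d x) * a') x := by
  have hN₁ := (hasDerivAt_stdNormalCDF (d x)).comp x hd
  have hN₂ := (hasDerivAt_stdNormalCDF (d x - a x)).comp x (hd.sub ha)
  refine ((hS.mul hN₁).sub (hB.mul hN₂)).congr_deriv ?_
  simp only [Function.comp_apply, Pi.sub_apply]
  linear_combination (a' - d') * hbal

variable {σ s K t : ℝ} (r q : ℝ)

lemma d1_mul_mul_sqrt (s K : ℝ) (hσ : σ ≠ 0) (ht : 0 < t) :
    d1 σ r q s K t * (σ * √t) = log (s / K) + (r - q + σ ^ 2 / 2) * t :=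
  div_mul_cancel₀ _ (mul_ne_zero hσ (sqrt_ne_zero'.2 ht))

lemma strike_mul_gaussianPDFReal_d2 (hσ : σ ≠ 0) (hsK : 0 < s / K) (ht : 0 < t) :
    K * exp (-r * t) * gaussianPDFReal 0 1 (d2 σ r q s K t)
      = s * exp (-q * t) * gaussianPDFReal 0 1 (d1 σ r q s K t) := by
  have hK : K ≠ 0 := (div_ne_zero_iff.1 hsK.ne').2
  have hexponent : σ * √t * d1 σ r q s K t - (σ * √t) ^ 2 / 2
      = log (s / K) + (r * t + -q * t) := by
    linear_combination d1_mul_mul_sqrt r q s K hσ ht - σ ^ 2 / 2 * sq_sqrt ht.le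
  rw [d2, gaussianPDFReal_sub_eq_mul_exp, sub_zero, NNReal.coe_one, div_one, hexponent, exp_add,
    exp_add, exp_log hsK, neg_mul r t, exp_neg]
  field_simp

lemma hasDerivAt_d1_spot (σ t : ℝ) (hs : s ≠ 0) (hK : K ≠ 0) :
    HasDerivAt (fun x => d1 σ r q x K t) (s⁻¹ / (σ * √t)) s := by
  have hlog : HasDerivAt (fun x => log (x / K)) s⁻¹ s := by
    refine (((hasDerivAt_id s).div_const K).log (div_ne_zero hs hK)).congr_deriv ?_
    simp only [id]
    field_simp
  exact (hlog.add_const _).div_const _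

lemma differentiableAt_d1_expiry (s K : ℝ) (hσ : σ ≠ 0) (ht : 0 < t) :
    DifferentiableAt ℝ (fun τ => d1 σ r q s K τ) t := by
  have hsqrt : DifferentiableAt ℝ (fun τ => σ * √τ) t :=
    (differentiableAt_id.sqrt ht.ne').const_mul σ
  exact DifferentiableAt.div (by fun_prop) hsqrt (mul_ne_zero hσ (sqrt_ne_zero'.2 ht))

lemma hasDerivAt_callPrice_spot (hσ : σ ≠ 0) (hsK : 0 < s / K) (ht : 0 < t) :
    HasDerivAt (fun x => callPrice σ r q K x t)
      (exp (-q * t) * stdNormalCDF (d1 σ r q s K t)) s := by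
  obtain ⟨hs, hK⟩ := div_ne_zero_iff.1 hsK.ne'
  refine (hasDerivAt_mul_stdNormalCDF_sub ((hasDerivAt_id s).mul_const (exp (-q * t)))
    (hasDerivAt_const s (K * exp (-r * t))) (hasDerivAt_d1_spot r q σ t hs hK)
    (hasDerivAt_const s (σ * √t)) (strike_mul_gaussianPDFReal_d2 r q hσ hsK ht)).congr_deriv ?_
  ring

lemma hasDerivAt_callPrice_expiry (hσ : σ ≠ 0) (hsK : 0 < s / K) (ht : 0 < t) :
    HasDerivAt (fun τ => callPrice σ r q K s τ)
      (-q * s * exp (-q * t) * stdNormalCDF (d1 σ r q s K t)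
        + r * K * exp (-r * t) * stdNormalCDF (d2 σ r q s K t)
        + s * exp (-q * t) * gaussianPDFReal 0 1 (d1 σ r q s K t) * (σ / (2 * √t))) t := by
  have hdiscount (c k : ℝ) : HasDerivAt (fun τ => c * exp (-k * τ)) (-k * c * exp (-k * t)) t := by
    refine (((hasDerivAt_id t).const_mul (-k)).exp.const_mul c).congr_deriv ?_
    simp only [id]
    ring
  refine (hasDerivAt_mul_stdNormalCDF_sub (hdiscount s q) (hdiscount K r)
    (differentiableAt_d1_expiry r q s K hσ ht).hasDerivAt
    ((hasDerivAt_sqrt ht.ne').const_mul σ)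
    (strike_mul_gaussianPDFReal_d2 r q hσ hsK ht)).congr_deriv ?_
  rw [d2]
  ring

lemma hasDerivAt_deriv_callPrice_spot (hσ : σ ≠ 0) (hsK : 0 < s / K) (ht : 0 < t) :
    HasDerivAt (fun x => deriv (fun y => callPrice σ r q K y t) x)
      (exp (-q * t) * (gaussianPDFReal 0 1 (d1 σ r q s K t) * (s⁻¹ / (σ * √t)))) s := by
  obtain ⟨hs, hK⟩ := div_ne_zero_iff.1 hsK.ne'
  have hdelta : (fun x => deriv (fun y => callPrice σ r q K y t) x) =ᶠ[𝓝 s]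
      fun x => exp (-q * t) * stdNormalCDF (d1 σ r q x K t) := by
    filter_upwards [(continuousAt_id.div_const K).eventually_const_lt hsK] with x hxK
    exact (hasDerivAt_callPrice_spot r q hσ hxK ht).deriv
  exact (((hasDerivAt_stdNormalCDF _).comp s (hasDerivAt_d1_spot r q σ t hs hK)).const_mul
    _).congr_of_eventuallyEq hdelta

end

theorem blackScholes_call_solves_forward_pde_general
    {σ s K t : ℝ} (r q : ℝ) (hσ : σ ≠ 0) (hsK : 0 < s / K) (ht : 0 < t) :
    deriv (fun τ => callPrice σ r q K s τ) t
      - (1 / 2) * σ ^ 2 * s ^ 2 * deriv (fun x => deriv (fun y => callPrice σ r q K y t) x) s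
      - (r - q) * s * deriv (fun x => callPrice σ r q K x t) s
      + r * callPrice σ r q K s t = 0 := by
  have hs : s ≠ 0 := (div_ne_zero_iff.1 hsK.ne').1
  rw [(hasDerivAt_callPrice_expiry r q hσ hsK ht).deriv,
    (hasDerivAt_deriv_callPrice_spot r q hσ hsK ht).deriv,
    (hasDerivAt_callPrice_spot r q hσ hsK ht).deriv, callPrice]
  field_simp [hs]
  ring

/-- The Black–Scholes call price satisfies the forward Black–Scholes PDE
    ∂u/∂t − (1/2)σ²s² ∂²u/∂s² − (r−q)s ∂u/∂s + r u = 0 for s > 0, 0 < t ≤ T. -/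
theorem blackScholes_call_solves_forward_pde
    (σ r q K T : ℝ) (hσ : 0 < σ) (hK : 0 < K) (hT : 0 < T) :
    ∀ s t : ℝ, 0 < s → 0 < t → t ≤ T →
      deriv (fun τ => callPrice σ r q K s τ) t
        - (1 / 2) * σ ^ 2 * s ^ 2 *
            deriv (fun x => deriv (fun y => callPrice σ r q K y t) x) s
        - (r - q) * s * deriv (fun x => callPrice σ r q K x t) s
        + r * callPrice σ r q K s t = 0 := by
  exact fun s t hs ht _ =>
    blackScholes_call_solves_forward_pde_general r q hσ.ne' (div_pos hs hK) ht
end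

section
/- Let σ > 0, r, q ∈ ℝ, s > 0, K > 0, t > 0. The Black–Scholes call price is strictly positive: C(s,t) = s·e^{-q t}·N(d₁(s,K,t)) − K·e^{-r t}·N(d₂(s,K,t)) > 0. -/
open Real Set

/-- The Black–Scholes European put price. -/
noncomputable def putPrice (σ r q K s t : ℝ) : ℝ :=
  K * Real.exp (-r * t) * stdNormalCDF (-(d2 σ r q s K t))
    - s * Real.exp (-q * t) * stdNormalCDF (-(d1 σ r q s K t))

/-- The standard normal probability density function. -/
noncomputable def stdNormalPDF (x : ℝ) : ℝ :=
  (Real.sqrt (2 * Real.pi))⁻¹ * Real.exp (-(x ^ 2) / 2)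

/-!
Put `a = σ √t` and `d = d₁`. The discounted spot is `K e^{-rt} e^{ad - a²/2}`, so the claim is
`N(d - a) < e^{ad - a²/2} N(d)`. This compares the two sides as integrals over `(-∞, d]`:
translating the normal density `φ` by `a` multiplies it by `e^{ax - a²/2}`, and for `a > 0` this
factor is below its value at the right endpoint.
-/

open MeasureTheory ProbabilityTheory

theorem setIntegral_lt_setIntegral_of_forall_lt {α : Type*} [MeasurableSpace α] {μ : Measure α}
    {s : Set α} {f g : α → ℝ} (hs : MeasurableSet s) (hμs : μ s ≠ 0) (hf : IntegrableOn f s μ)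
    (hg : IntegrableOn g s μ) (hfg : ∀ x ∈ s, f x < g x) :
    ∫ x in s, f x ∂μ < ∫ x in s, g x ∂μ := by
  have hpos : ∀ x ∈ s, 0 < g x - f x := fun x hx => sub_pos.2 (hfg x hx)
  have hsupport : s ⊆ Function.support fun x => g x - f x := fun x hx => (hpos x hx).ne'
  rw [← sub_pos, ← integral_sub hg hf, setIntegral_pos_iff_support_of_nonneg_ae
    (ae_restrict_of_forall_mem hs fun x hx => (hpos x hx).le) (hg.sub hf),
    inter_eq_right.2 hsupport]
  exact pos_iff_ne_zero.2 hμs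

theorem integral_comp_sub_right_Iic {E : Type*} [NormedAddCommGroup E] [NormedSpace ℝ E]
    (f : ℝ → E) (a d : ℝ) : ∫ x in Iic d, f (x - a) = ∫ x in Iic (d - a), f x := by
  have h := (measurePreserving_sub_right volume a).setIntegral_preimage_emb
    (MeasurableEquiv.subRight a).measurableEmbedding f (Iic (d - a))
  rwa [preimage_sub_const_Iic, sub_add_cancel] at h

theorem stdNormalPDF_eq_gaussianPDFReal : stdNormalPDF = gaussianPDFReal 0 1 := by
  ext x
  simp [stdNormalPDF, gaussianPDFReal]

theorem stdNormalPDF_pos (x : ℝ) : 0 < stdNormalPDF x := by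
  rw [stdNormalPDF_eq_gaussianPDFReal]
  exact gaussianPDFReal_pos 0 1 x one_ne_zero

theorem integrable_stdNormalPDF : Integrable stdNormalPDF := by
  rw [stdNormalPDF_eq_gaussianPDFReal]
  exact integrable_gaussianPDFReal 0 1

theorem stdNormalPDF_sub (x a : ℝ) :
    stdNormalPDF (x - a) = exp (a * x - a ^ 2 / 2) * stdNormalPDF x := by
  have hexponent : -((x - a) ^ 2) / 2 = (a * x - a ^ 2 / 2) + -(x ^ 2) / 2 := by ring
  rw [stdNormalPDF, stdNormalPDF, hexponent, exp_add, mul_left_comm]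

theorem stdNormalPDF_sub_lt {a x d : ℝ} (ha : 0 < a) (hx : x < d) :
    stdNormalPDF (x - a) < exp (a * d - a ^ 2 / 2) * stdNormalPDF x := by
  have := stdNormalPDF_pos x
  rw [stdNormalPDF_sub]
  gcongr

theorem stdNormalCDF_eq_integral_stdNormalPDF (x : ℝ) :
    stdNormalCDF x = ∫ y in Iic x, stdNormalPDF y :=
  rfl

theorem stdNormalCDF_sub_lt {a : ℝ} (ha : 0 < a) (d : ℝ) :
    stdNormalCDF (d - a) < exp (a * d - a ^ 2 / 2) * stdNormalCDF d := by
  calc stdNormalCDF (d - a)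
      = ∫ x in Iio d, stdNormalPDF (x - a) := by
        rw [stdNormalCDF_eq_integral_stdNormalPDF, ← integral_comp_sub_right_Iic,
          integral_Iic_eq_integral_Iio]
    _ < ∫ x in Iio d, exp (a * d - a ^ 2 / 2) * stdNormalPDF x :=
        setIntegral_lt_setIntegral_of_forall_lt measurableSet_Iio (by simp)
          (integrable_stdNormalPDF.comp_sub_right a).integrableOn
          (integrable_stdNormalPDF.const_mul _).integrableOn
          fun _ hx => stdNormalPDF_sub_lt ha hx
    _ = exp (a * d - a ^ 2 / 2) * stdNormalCDF d := by
        rw [integral_const_mul, ← integral_Iic_eq_integral_Iio,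
          stdNormalCDF_eq_integral_stdNormalPDF]

theorem discounted_spot_eq_discounted_strike_mul_exp {σ s K t : ℝ} (r q : ℝ) (hσ : σ ≠ 0)
    (hs : 0 < s) (hK : 0 < K) (ht : 0 < t) :
    s * exp (-q * t) =
      K * exp (-r * t) * exp (σ * √t * d1 σ r q s K t - (σ * √t) ^ 2 / 2) := by
  have hd1 : σ * √t * d1 σ r q s K t = log (s / K) + (r - q + σ ^ 2 / 2) * t :=
    mul_div_cancel₀ _ (mul_ne_zero hσ (sqrt_pos.2 ht).ne')
  have hexponent : σ * √t * d1 σ r q s K t - (σ * √t) ^ 2 / 2 =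
      log (s / K) + -q * t - -r * t := by
    rw [hd1, mul_pow, sq_sqrt ht.le]
    ring
  rw [hexponent, exp_sub, exp_add, exp_log (div_pos hs hK)]
  field_simp

/-- The Black–Scholes call price is strictly positive. -/
theorem blackScholes_call_pos
    (σ r q s K t : ℝ) (hσ : 0 < σ) (hs : 0 < s) (hK : 0 < K) (ht : 0 < t) :
    0 < callPrice σ r q K s t := by
  have hvol : 0 < σ * √t := mul_pos hσ (sqrt_pos.2 ht)
  have hstrike : 0 < K * exp (-r * t) := by positivity
  rw [callPrice, d2, discounted_spot_eq_discounted_strike_mul_exp r q hσ.ne' hs hK ht, mul_assoc,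
    sub_pos]
  exact mul_lt_mul_of_pos_left (stdNormalCDF_sub_lt hvol _) hstrike
end

section
/- Let σ > 0, r, q ∈ ℝ, K > 0 and t > 0 be fixed. The Black–Scholes call price satisfies the far-field boundary behavior lim_{s→∞} [C(s,t) − (s·e^{-q t} − K·e^{-r t})] = 0, where C(s,t) = s·e^{-q t}·N(d₁(s,K,t)) − K·e^{-r t}·N(d₂(s,K,t)). -/
open Real Set

/-!
By put-call parity, which is the symmetry `N(-x) = 1 - N(x)`, the difference in question is the put
price `K e^{-rt} N(-d₂) - s e^{-qt} N(-d₁)`. Both `d₁` and `d₂` tend to infinity with `s`, so the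
first term vanishes. In the second, `s` is a constant multiple of `exp (σ √t d₁)`, and a Chernoff
bound makes `N(-x)` decay faster than any exponential.
-/

open Filter MeasureTheory ProbabilityTheory Topology

theorem tendsto_exp_mul_cdf_atBot {μ : Measure ℝ} [IsProbabilityMeasure μ] {a b : ℝ}
    (hba : b < a) (hb : b ≤ 0) (hint : Integrable (fun x => exp (b * x)) μ) :
    Tendsto (fun x => exp (a * x) * cdf μ x) atBot (𝓝 0) := by
  have chernoff (x : ℝ) : cdf μ x ≤ exp (-b * x) * mgf id μ b := by
    rw [cdf_eq_real]
    exact measure_le_le_exp_mul_mgf x hb hint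
  have hbound : Tendsto (fun x => exp ((a - b) * x) * mgf id μ b) atBot (𝓝 0) := by
    simpa using (tendsto_exp_atBot.comp
      (tendsto_id.const_mul_atBot (sub_pos.2 hba))).mul_const (mgf id μ b)
  refine squeeze_zero (fun x => mul_nonneg (exp_nonneg _) (cdf_nonneg μ x)) (fun x => ?_) hbound
  calc exp (a * x) * cdf μ x
      ≤ exp (a * x) * (exp (-b * x) * mgf id μ b) := by gcongr; exact chernoff x
    _ = exp ((a - b) * x) * mgf id μ b := by
      rw [← mul_assoc, ← exp_add]
      ring_nf

theorem cdf_neg_eq_one_sub_cdf (μ : Measure ℝ) [IsProbabilityMeasure μ] [μ.IsNegInvariant]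
    [NullSingletonClass μ] (x : ℝ) : cdf μ (-x) = 1 - cdf μ x := by
  calc cdf μ (-x) = μ.real (Iic (-x)) := cdf_eq_real μ _
    _ = μ.real (Ici x) := by
      rw [measureReal_def, measureReal_def, ← Measure.measure_neg, Set.neg_Iic, neg_neg]
    _ = μ.real (Iic x)ᶜ := by rw [compl_Iic, measureReal_congr Ioi_ae_eq_Ici]
    _ = 1 - cdf μ x := by rw [probReal_compl_eq_one_sub measurableSet_Iic, cdf_eq_real]

instance isNegInvariant_gaussianReal_zero (v : NNReal) :
    (gaussianReal 0 v).IsNegInvariant where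
  neg_eq_self := gaussianReal_map_neg.trans (by rw [neg_zero])

theorem stdNormalCDF_eq_cdf (x : ℝ) : stdNormalCDF x = cdf (gaussianReal 0 1) x := by
  rw [cdf_eq_real, measureReal_def, gaussianReal_apply_eq_integral 0 one_ne_zero,
    ENNReal.toReal_ofReal (integral_nonneg fun y => gaussianPDFReal_nonneg 0 1 y)]
  simp [stdNormalCDF, gaussianPDFReal]

theorem stdNormalCDF_neg (x : ℝ) : stdNormalCDF (-x) = 1 - stdNormalCDF x := by
  have : NullSingletonClass (gaussianReal 0 1) := nullSingletonClass_gaussianReal one_ne_zero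
  simpa only [stdNormalCDF_eq_cdf] using cdf_neg_eq_one_sub_cdf (gaussianReal 0 1) x

theorem tendsto_exp_mul_stdNormalCDF_atBot (a : ℝ) :
    Tendsto (fun x => exp (a * x) * stdNormalCDF x) atBot (𝓝 0) := by
  simp only [stdNormalCDF_eq_cdf]
  have hb : min a 0 - 1 < min a 0 := sub_one_lt _
  exact tendsto_exp_mul_cdf_atBot (hb.trans_le (min_le_left a 0))
    (hb.le.trans (min_le_right a 0)) (integrable_exp_mul_gaussianReal _)

theorem tendsto_stdNormalCDF_atBot : Tendsto stdNormalCDF atBot (𝓝 0) := by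
  simpa using tendsto_exp_mul_stdNormalCDF_atBot 0

theorem callPrice_sub_putPrice (σ r q K s t : ℝ) :
    callPrice σ r q K s t - putPrice σ r q K s t = s * exp (-q * t) - K * exp (-r * t) := by
  simp only [callPrice, putPrice, stdNormalCDF_neg]
  ring

section FarField

variable {σ K t : ℝ} (r q : ℝ)

theorem eq_strike_mul_exp_d1 {s : ℝ} (hσ : σ ≠ 0) (hs : 0 < s) (hK : 0 < K) (ht : 0 < t) :
    s = K * exp (-((r - q + σ ^ 2 / 2) * t)) * exp (σ * √t * d1 σ r q s K t) := by
  have hd1 : σ * √t * d1 σ r q s K t = log (s / K) + (r - q + σ ^ 2 / 2) * t :=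
    mul_div_cancel₀ _ (mul_ne_zero hσ (sqrt_ne_zero'.2 ht))
  rw [hd1, mul_assoc, ← exp_add, neg_add_cancel_comm_assoc, exp_log (div_pos hs hK),
    mul_div_cancel₀ _ hK.ne']

theorem tendsto_d1_atTop (hσ : 0 < σ) (hK : 0 < K) (ht : 0 < t) :
    Tendsto (fun s => d1 σ r q s K t) atTop atTop := by
  have hlog : Tendsto (fun s => log (s / K)) atTop atTop :=
    tendsto_log_atTop.comp (tendsto_id.atTop_div_const hK)
  exact (tendsto_atTop_add_const_right _ _ hlog).atTop_div_const (mul_pos hσ (sqrt_pos.2 ht))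

theorem tendsto_d2_atTop (hσ : 0 < σ) (hK : 0 < K) (ht : 0 < t) :
    Tendsto (fun s => d2 σ r q s K t) atTop atTop :=
  tendsto_atTop_add_const_right _ (-(σ * √t)) (tendsto_d1_atTop r q hσ hK ht)

theorem tendsto_mul_stdNormalCDF_neg_d1 (hσ : 0 < σ) (hK : 0 < K) (ht : 0 < t) :
    Tendsto (fun s => s * stdNormalCDF (-d1 σ r q s K t)) atTop (𝓝 0) := by
  have htail := (tendsto_exp_mul_stdNormalCDF_atBot (-(σ * √t))).comp
    (tendsto_neg_atTop_atBot.comp (tendsto_d1_atTop r q hσ hK ht))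
  have hlim := htail.const_mul (K * exp (-((r - q + σ ^ 2 / 2) * t)))
  rw [mul_zero] at hlim
  refine hlim.congr' ?_
  filter_upwards [eventually_gt_atTop 0] with s hs
  simp only [Function.comp_apply, neg_mul_neg]
  rw [← mul_assoc, ← eq_strike_mul_exp_d1 r q hσ.ne' hs hK ht]

theorem tendsto_putPrice_atTop (hσ : 0 < σ) (hK : 0 < K) (ht : 0 < t) :
    Tendsto (fun s => putPrice σ r q K s t) atTop (𝓝 0) := by
  have hstrike : Tendsto (fun s => K * exp (-r * t) * stdNormalCDF (-d2 σ r q s K t))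
      atTop (𝓝 0) := by
    simpa using (tendsto_stdNormalCDF_atBot.comp
      (tendsto_neg_atTop_atBot.comp (tendsto_d2_atTop r q hσ hK ht))).const_mul (K * exp (-r * t))
  have hspot : Tendsto (fun s => s * exp (-q * t) * stdNormalCDF (-d1 σ r q s K t))
      atTop (𝓝 0) := by
    simpa [mul_right_comm] using
      (tendsto_mul_stdNormalCDF_neg_d1 r q hσ hK ht).mul_const (exp (-q * t))
  simpa only [putPrice, sub_zero] using hstrike.sub hspot

end FarField

/-- Far-field behavior: C(s,t) − (s·e^{-qt} − K·e^{-rt}) → 0 as s → ∞. -/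
theorem blackScholes_call_far_field
    (σ r q K t : ℝ) (hσ : 0 < σ) (hK : 0 < K) (ht : 0 < t) :
    Filter.Tendsto
      (fun s => callPrice σ r q K s t - (s * Real.exp (-q * t) - K * Real.exp (-r * t)))
      Filter.atTop (nhds 0) := by
  refine (tendsto_putPrice_atTop r q hσ hK ht).congr fun s => ?_
  rw [← callPrice_sub_putPrice σ r q K s t, sub_sub_cancel]
end

section
/- Let σ > 0, r, q ∈ ℝ, B > 0, T > 0 and set λ = (2/σ²)(r − q − σ²/2). If v : (0,∞) × (0,T] → ℝ is twice continuously differentiable in s and continuously differentiable in t and satisfies the forward Black–Scholes PDE ∂v/∂t − (1/2)σ²s² ∂²v/∂s² − (r−q)s ∂v/∂s + r v = 0 on (0,∞) × (0,T], then the reflected function w(s,t) = (B/s)^λ · v(B²/s, t) also satisfies the forward Black–Scholes PDE on (0,∞) × (0,T]. -/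
/-!
With `θ = s ∂/∂s`, the spatial Black–Scholes operator is `(σ² / 2) θ (θ + λ) - r`: this is what
singles out the exponent `λ`. The reflection `R f s = (B / s) ^ λ * f (B² / s)` satisfies
`θ R = -R (θ + λ)`, equivalently `(θ + λ) R = -R θ`, so it commutes with `θ (θ + λ)`, and hence with
the whole operator.
-/

open Real Set

/-- The reflection exponent λ = (2/σ²)(r − q − σ²/2) for a barrier. -/
noncomputable def reflectionExponent (σ r q : ℝ) : ℝ :=
  (2 / σ ^ 2) * (r - q - σ ^ 2 / 2)

open Topology

theorem sq_mul_reflectionExponent_add_one {σ : ℝ} (hσ : σ ≠ 0) (r q : ℝ) :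
    σ ^ 2 * (reflectionExponent σ r q + 1) = 2 * (r - q) := by
  rw [reflectionExponent]
  field_simp
  ring

/-- The Euler operator `θ = x d/dx`, in terms of which the Black–Scholes operator has constant
coefficients. -/
noncomputable def eulerDeriv (f : ℝ → ℝ) (x : ℝ) : ℝ :=
  x * deriv f x

/-- The reflection `R f` of a price profile `f` in the barrier `B`. The exponent `l` is left free;
the reflection principle uses `l = reflectionExponent σ r q`. -/
noncomputable def barrierReflection (B l : ℝ) (f : ℝ → ℝ) (x : ℝ) : ℝ :=
  (B / x) ^ l * f (B ^ 2 / x)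

/-- The spatial part of the Black–Scholes operator, with the sign for which the forward equation
reads `∂u/∂t = blackScholesGenerator σ r q u`. -/
noncomputable def blackScholesGenerator (σ r q : ℝ) (f : ℝ → ℝ) (s : ℝ) : ℝ :=
  1 / 2 * σ ^ 2 * s ^ 2 * deriv (deriv f) s + (r - q) * s * deriv f s - r * f s

/-- The forward Black–Scholes operator, whose zeros are the solutions of the forward Black–Scholes
equation. -/
noncomputable def blackScholesOperator (σ r q : ℝ) (u : ℝ → ℝ → ℝ) (s t : ℝ) : ℝ :=
  deriv (fun τ => u s τ) t
    - (1 / 2) * σ ^ 2 * s ^ 2 * deriv (fun x => deriv (fun y => u y t) x) s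
    - (r - q) * s * deriv (fun x => u x t) s
    + r * u s t

theorem blackScholesOperator_eq_deriv_sub_generator (σ r q : ℝ) (u : ℝ → ℝ → ℝ) (s t : ℝ) :
    blackScholesOperator σ r q u s t =
      deriv (fun τ => u s τ) t - blackScholesGenerator σ r q (fun x => u x t) s := by
  rw [blackScholesOperator, blackScholesGenerator]
  ring

section Euler

variable {f : ℝ → ℝ} {x : ℝ}

theorem differentiableAt_eulerDeriv_iff (hx : x ≠ 0) :
    DifferentiableAt ℝ (eulerDeriv f) x ↔ DifferentiableAt ℝ (deriv f) x := by
  refine ⟨fun h => ?_, differentiableAt_fun_id.mul⟩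
  refine (h.fun_div differentiableAt_fun_id hx).congr_of_eventuallyEq ?_
  filter_upwards [eventually_ne_nhds hx] with y hy
  exact (mul_div_cancel_left₀ (deriv f y) hy).symm

theorem eulerDeriv_eulerDeriv (hf : DifferentiableAt ℝ (deriv f) x) :
    eulerDeriv (eulerDeriv f) x = x * deriv f x + x ^ 2 * deriv (deriv f) x := by
  have h : HasDerivAt (eulerDeriv f) (1 * deriv f x + x * deriv (deriv f) x) x :=
    (hasDerivAt_id' x).mul hf.hasDerivAt
  rw [eulerDeriv, h.deriv]
  ring

theorem blackScholesGenerator_eq_eulerDeriv {σ r q l : ℝ} (hl : σ ^ 2 * (l + 1) = 2 * (r - q))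
    (hf : DifferentiableAt ℝ (deriv f) x) :
    blackScholesGenerator σ r q f x =
      σ ^ 2 / 2 * (eulerDeriv (eulerDeriv f) x + l * eulerDeriv f x) - r * f x := by
  rw [blackScholesGenerator, eulerDeriv_eulerDeriv hf, eulerDeriv]
  linear_combination -x * deriv f x / 2 * hl

end Euler

section Reflection

variable {B l x : ℝ} {f : ℝ → ℝ}

theorem hasDerivAt_barrierReflection (hB : B ≠ 0) (hx : x ≠ 0)
    (hf : DifferentiableAt ℝ f (B ^ 2 / x)) :
    HasDerivAt (barrierReflection B l f)
      (-(barrierReflection B l (eulerDeriv f) x + l * barrierReflection B l f x) / x) x := by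
  have hdiv (c : ℝ) : HasDerivAt (fun y => c / y) (-c / x ^ 2) x := by
    simpa using (hasDerivAt_const x c).fun_div (hasDerivAt_id' x) hx
  have hBx : B / x ≠ 0 := div_ne_zero hB hx
  have hpow := (hdiv B).rpow_const (p := l) (.inl hBx)
  have hcomp := hf.hasDerivAt.comp x (hdiv (B ^ 2))
  refine (hpow.mul hcomp).congr_deriv ?_
  simp only [barrierReflection, eulerDeriv, Function.comp_apply, Real.rpow_sub_one hBx]
  field_simp
  ring

theorem eulerDeriv_barrierReflection (hB : B ≠ 0) (hx : x ≠ 0)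
    (hf : DifferentiableAt ℝ f (B ^ 2 / x)) :
    eulerDeriv (barrierReflection B l f) x =
      -(barrierReflection B l (eulerDeriv f) x + l * barrierReflection B l f x) := by
  rw [eulerDeriv, (hasDerivAt_barrierReflection hB hx hf).deriv, mul_div_cancel₀ _ hx]

theorem eulerDeriv_barrierReflection_eventuallyEq (hB : B ≠ 0) (hx : x ≠ 0)
    (hf : ∀ᶠ y in 𝓝 (B ^ 2 / x), DifferentiableAt ℝ f y) :
    eulerDeriv (barrierReflection B l f) =ᶠ[𝓝 x]
      fun y => -(barrierReflection B l (eulerDeriv f) y + l * barrierReflection B l f y) := by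
  have hdiv : ContinuousAt (fun y => B ^ 2 / y) x := by fun_prop (disch := exact hx)
  filter_upwards [hdiv.eventually hf, eventually_ne_nhds hx] with y hfy hy
  exact eulerDeriv_barrierReflection hB hy hfy

theorem hasDerivAt_eulerDeriv_barrierReflection (hB : B ≠ 0) (hx : x ≠ 0)
    (hf : ∀ᶠ y in 𝓝 (B ^ 2 / x), DifferentiableAt ℝ f y)
    (hf' : DifferentiableAt ℝ (deriv f) (B ^ 2 / x)) :
    HasDerivAt (eulerDeriv (barrierReflection B l f))
      (-(deriv (barrierReflection B l (eulerDeriv f)) x +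
        l * deriv (barrierReflection B l f) x)) x := by
  have hθf : DifferentiableAt ℝ (eulerDeriv f) (B ^ 2 / x) :=
    (differentiableAt_eulerDeriv_iff (div_ne_zero (pow_ne_zero 2 hB) hx)).2 hf'
  have hRθf := (hasDerivAt_barrierReflection (l := l) hB hx hθf).differentiableAt.hasDerivAt
  have hRf :=
    (hasDerivAt_barrierReflection (l := l) hB hx hf.self_of_nhds).differentiableAt.hasDerivAt
  exact (hRθf.fun_add (hRf.const_mul l)).fun_neg.congr_of_eventuallyEq
    (eulerDeriv_barrierReflection_eventuallyEq hB hx hf)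

theorem eulerDeriv_eulerDeriv_add_barrierReflection (hB : B ≠ 0) (hx : x ≠ 0)
    (hf : ∀ᶠ y in 𝓝 (B ^ 2 / x), DifferentiableAt ℝ f y)
    (hf' : DifferentiableAt ℝ (deriv f) (B ^ 2 / x)) :
    eulerDeriv (eulerDeriv (barrierReflection B l f)) x + l * eulerDeriv (barrierReflection B l f) x
      = barrierReflection B l (fun y => eulerDeriv (eulerDeriv f) y + l * eulerDeriv f y) x := by
  have hθf : DifferentiableAt ℝ (eulerDeriv f) (B ^ 2 / x) :=
    (differentiableAt_eulerDeriv_iff (div_ne_zero (pow_ne_zero 2 hB) hx)).2 hf'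
  calc
    _ = -eulerDeriv (barrierReflection B l (eulerDeriv f)) x := by
      rw [eulerDeriv, (hasDerivAt_eulerDeriv_barrierReflection hB hx hf hf').deriv]
      simp only [eulerDeriv]
      ring
    _ = barrierReflection B l (eulerDeriv (eulerDeriv f)) x +
        l * barrierReflection B l (eulerDeriv f) x := by
      rw [eulerDeriv_barrierReflection hB hx hθf, neg_neg]
    _ = _ := by
      simp only [barrierReflection]
      ring

theorem blackScholesGenerator_barrierReflection {σ r q : ℝ}
    (hl : σ ^ 2 * (l + 1) = 2 * (r - q)) (hB : B ≠ 0) (hx : x ≠ 0)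
    (hf : ∀ᶠ y in 𝓝 (B ^ 2 / x), DifferentiableAt ℝ f y)
    (hf' : DifferentiableAt ℝ (deriv f) (B ^ 2 / x)) :
    blackScholesGenerator σ r q (barrierReflection B l f) x =
      barrierReflection B l (blackScholesGenerator σ r q f) x := by
  have hRf' : DifferentiableAt ℝ (deriv (barrierReflection B l f)) x :=
    (differentiableAt_eulerDeriv_iff hx).1
      (hasDerivAt_eulerDeriv_barrierReflection hB hx hf hf').differentiableAt
  rw [blackScholesGenerator_eq_eulerDeriv hl hRf',
    eulerDeriv_eulerDeriv_add_barrierReflection hB hx hf hf']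
  simp only [barrierReflection, blackScholesGenerator_eq_eulerDeriv hl hf']
  ring

end Reflection

theorem blackScholes_reflection_invariance_general {σ r q l B s t : ℝ} {v : ℝ → ℝ → ℝ}
    (hl : σ ^ 2 * (l + 1) = 2 * (r - q)) (hB : B ≠ 0) (hs : s ≠ 0)
    (hv : ∀ᶠ y in 𝓝 (B ^ 2 / s), DifferentiableAt ℝ (fun x => v x t) y)
    (hv' : DifferentiableAt ℝ (deriv fun x => v x t) (B ^ 2 / s)) :
    blackScholesOperator σ r q (fun x τ => barrierReflection B l (fun y => v y τ) x) s t =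
      (B / s) ^ l * blackScholesOperator σ r q v (B ^ 2 / s) t := by
  have hspace := blackScholesGenerator_barrierReflection hl hB hs hv hv'
  have htime : deriv (fun τ => barrierReflection B l (fun y => v y τ) s) t =
      (B / s) ^ l * deriv (fun τ => v (B ^ 2 / s) τ) t :=
    deriv_const_mul_field _
  rw [blackScholesOperator_eq_deriv_sub_generator, blackScholesOperator_eq_deriv_sub_generator,
    htime, hspace, barrierReflection]
  ring

/-- If v solves the forward Black–Scholes PDE on (0,∞)×(0,T], then so does the
    reflected function w(s,t) = (B/s)^λ · v(B²/s, t), with λ = (2/σ²)(r−q−σ²/2). -/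
theorem blackScholes_reflection_invariance
    (σ r q B T : ℝ) (hσ : 0 < σ) (hB : 0 < B) (hT : 0 < T)
    (v : ℝ → ℝ → ℝ)
    (hv_s : ∀ t ∈ Set.Ioc (0 : ℝ) T, ContDiffOn ℝ 2 (fun s => v s t) (Set.Ioi 0))
    (hv_t : ∀ s ∈ Set.Ioi (0 : ℝ), ContDiffOn ℝ 1 (fun t => v s t) (Set.Ioc 0 T))
    (hpde : ∀ s ∈ Set.Ioi (0 : ℝ), ∀ t ∈ Set.Ioc (0 : ℝ) T,
      deriv (fun τ => v s τ) t
        - (1 / 2) * σ ^ 2 * s ^ 2 * deriv (fun x => deriv (fun y => v y t) x) s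
        - (r - q) * s * deriv (fun x => v x t) s
        + r * v s t = 0) :
    ∀ s ∈ Set.Ioi (0 : ℝ), ∀ t ∈ Set.Ioc (0 : ℝ) T,
      deriv (fun τ => (B / s) ^ reflectionExponent σ r q * v (B ^ 2 / s) τ) t
        - (1 / 2) * σ ^ 2 * s ^ 2 *
            deriv (fun x =>
              deriv (fun y => (B / y) ^ reflectionExponent σ r q * v (B ^ 2 / y) t) x) s
        - (r - q) * s *
            deriv (fun x => (B / x) ^ reflectionExponent σ r q * v (B ^ 2 / x) t) s
        + r * ((B / s) ^ reflectionExponent σ r q * v (B ^ 2 / s) t) = 0 := by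
  intro s hs t ht
  have hz : 0 < B ^ 2 / s := div_pos (pow_pos hB 2) hs
  have hv (y : ℝ) (hy : 0 < y) : ContDiffAt ℝ 2 (fun x => v x t) y :=
    (hv_s t ht).contDiffAt (Ioi_mem_nhds hy)
  have hdiff : ∀ᶠ y in 𝓝 (B ^ 2 / s), DifferentiableAt ℝ (fun x => v x t) y :=
    (lt_mem_nhds hz).mono fun y hy => (hv y hy).differentiableAt two_ne_zero
  have hdiff' : DifferentiableAt ℝ (deriv fun x => v x t) (B ^ 2 / s) :=
    ((hv _ hz).derivWithin (m := 1) one_add_one_eq_two.le).differentiableAt one_ne_zero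
  exact (blackScholes_reflection_invariance_general (sq_mul_reflectionExponent_add_one hσ.ne' r q)
    hB.ne' hs.ne' hdiff hdiff').trans (mul_eq_zero_of_right _ (hpde _ hz t ht))
end
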